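/- arXiv:2512.17706 — 2 statements merged into one kernel-verified Lean document; each statement's English description precedes it below -/
import Mathlib

section
/- Let ω = e^{2πi/3} and define the qubit POVMs E = (diag(1,0), diag(0,1)), F = ((1/2)·[[1,1],[1,1]], (1/2)·[[1,−1],[−1,1]]), G = ((1/2)·[[1, ω],[conj(ω), 1]], (1/2)·[[1, −ω],[−conj(ω), 1]]), and H = ((1/2)·[[1, conj(ω)],[ω, 1]], (1/2)·[[1, −conj(ω)],[−ω, 1]]). If s ∈ [0,1] is such that the noisy POVMs E(s), F(s), G(s), H(s) are compatible, then s ≤ 2/√13. Consequently, the minimum compatibility degree of four 2-outcome qubit measurements satisfies s_ℂ(2, 4, (2,2,2,2)) ≤ 2/√13. -/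
open Matrix
open scoped ComplexOrder

/-- A POVM: a family of PSD complex Hermitian matrices summing to the identity. -/
def IsPOVM {d : ℕ} {ι : Type*} [Fintype ι] (E : ι → Matrix (Fin d) (Fin d) ℂ) : Prop :=
  (∀ i, (E i).PosSemidef) ∧ ∑ i, E i = 1

/-- A `g`-tuple of POVMs (with `k x` outcomes each) is compatible if there is a joint POVM
with the corresponding marginals. -/
def CompatibleFamily {d g : ℕ} (k : Fin g → ℕ)
    (E : (x : Fin g) → Fin (k x) → Matrix (Fin d) (Fin d) ℂ) : Prop :=
  ∃ J : ((y : Fin g) → Fin (k y)) → Matrix (Fin d) (Fin d) ℂ,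
    IsPOVM J ∧
      ∀ (x : Fin g) (i : Fin (k x)),
        E x i = ∑ j : (y : Fin g) → Fin (k y), if j x = i then J j else 0

/-- The compatibility degree of a tuple of POVMs: the supremum of those `s ∈ [0,1]` for which
the noisy versions `E_i(s) = s·E_i + (1−s)·I/k` are compatible. -/
noncomputable def compatDeg {d g : ℕ} (k : Fin g → ℕ)
    (E : (x : Fin g) → Fin (k x) → Matrix (Fin d) (Fin d) ℂ) : ℝ :=
  sSup {s : ℝ | s ∈ Set.Icc (0 : ℝ) 1 ∧
    CompatibleFamily k
      (fun x i => s • E x i + ((1 - s) / (k x : ℝ)) • (1 : Matrix (Fin d) (Fin d) ℂ))}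

/-- `ω = e^{2πi/3}`. -/
noncomputable def ω : ℂ := Complex.exp (2 * Real.pi * Complex.I / 3)

/-- The four dichotomic qubit POVMs `E, F, G, H`. -/
noncomputable def M7 : Fin 4 → Fin 2 → Matrix (Fin 2) (Fin 2) ℂ
  | 0, 0 => !![1, 0; 0, 0]
  | 0, 1 => !![0, 0; 0, 1]
  | 1, 0 => (1 / 2 : ℂ) • !![1, 1; 1, 1]
  | 1, 1 => (1 / 2 : ℂ) • !![1, -1; -1, 1]
  | 2, 0 => (1 / 2 : ℂ) • !![1, ω; starRingEnd ℂ ω, 1]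
  | 2, 1 => (1 / 2 : ℂ) • !![1, -ω; -(starRingEnd ℂ ω), 1]
  | 3, 0 => (1 / 2 : ℂ) • !![1, starRingEnd ℂ ω; ω, 1]
  | 3, 1 => (1 / 2 : ℂ) • !![1, -(starRingEnd ℂ ω); -ω, 1]


theorem om_eq : ω = ⟨-1/2, Real.sqrt 3 / 2⟩ := by
  have h : ω = Complex.exp (((2 * Real.pi / 3 : ℝ) : ℂ) * Complex.I) := by
    unfold ω; congr 1; push_cast; ring
  have e : (2 * Real.pi / 3 : ℝ) = Real.pi - Real.pi / 3 := by ring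
  apply Complex.ext
  · rw [h, Complex.exp_ofReal_mul_I_re, e, Real.cos_pi_sub, Real.cos_pi_div_three]; norm_num
  · rw [h, Complex.exp_ofReal_mul_I_im, e, Real.sin_pi_sub, Real.sin_pi_div_three]

theorem om_re : ω.re = -1/2 := by rw [om_eq]
theorem om_im : ω.im = Real.sqrt 3 / 2 := by rw [om_eq]

theorem om_mul : ω * starRingEnd ℂ ω = 1 := by
  have h3 : Real.sqrt 3 * Real.sqrt 3 = 3 := Real.mul_self_sqrt (by norm_num)
  apply Complex.ext
  · simp [om_re, om_im]; linarith
  · simp [om_re, om_im]; ring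

noncomputable def sg (i : Fin 2) : ℝ := if i = 0 then 1 else -1

theorem psd_of_proj (P : Matrix (Fin 2) (Fin 2) ℂ) (h : P = Pᴴ * P) : P.PosSemidef := by
  rw [h]; exact posSemidef_conjTranspose_mul_self P

theorem half_psd (w : ℂ) (hw : w * starRingEnd ℂ w = 1) :
    ((1 / 2 : ℂ) • !![1, w; starRingEnd ℂ w, 1]).PosSemidef := by
  apply psd_of_proj
  have hw' : starRingEnd ℂ w * w = 1 := by rw [mul_comm]; exact hw
  ext i j
  fin_cases i <;> fin_cases j <;> simp [Matrix.mul_apply, Fin.sum_univ_two, Complex.conj_ofNat] <;>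
    first
    | linear_combination (-1/4 : ℂ) * hw
    | ring

theorem M7_povm (x : Fin 4) : IsPOVM (M7 x) := by
  have hw := om_mul
  have hw' : starRingEnd ℂ ω * ω = 1 := by rw [mul_comm]; exact hw
  constructor
  · intro i
    fin_cases x <;> fin_cases i
    · apply psd_of_proj; ext i j
      fin_cases i <;> fin_cases j <;> simp [M7, Matrix.mul_apply, Fin.sum_univ_two]
    · apply psd_of_proj; ext i j
      fin_cases i <;> fin_cases j <;> simp [M7, Matrix.mul_apply, Fin.sum_univ_two]
    · simpa [M7] using half_psd 1 (by simp)
    · simpa [M7] using half_psd (-1) (by simp)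
    · simpa [M7] using half_psd ω hw
    · simpa [M7] using half_psd (-ω) (by simpa using hw)
    · simpa [M7] using half_psd (starRingEnd ℂ ω) (by simpa using hw')
    · simpa [M7] using half_psd (-(starRingEnd ℂ ω)) (by simpa using hw')
  · rw [Fin.sum_univ_two]
    ext i j
    fin_cases x <;> fin_cases i <;> fin_cases j <;> simp [M7] <;> norm_num

theorem real_bound (p r x y e cx cy : ℝ) (hp : 0 ≤ p) (hr : 0 ≤ r)
    (h : x ^ 2 + y ^ 2 ≤ p * r) (he : e ^ 2 = 1) (hc : cx ^ 2 + cy ^ 2 ≤ 4) :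
    e * (p - r) / 2 + 3 / 4 * (x * cx + y * cy) ≤ Real.sqrt 13 / 4 * (p + r) := by
  have h13 : Real.sqrt 13 ^ 2 = 13 := Real.sq_sqrt (by norm_num)
  apply le_of_sq_le_sq _ (by positivity)
  have hcs : (x * cx + y * cy) ^ 2 ≤ 4 * (x ^ 2 + y ^ 2) := by
    nlinarith [sq_nonneg (x * cy - y * cx), mul_nonneg (sub_nonneg.2 hc) (add_nonneg (sq_nonneg x) (sq_nonneg y))]
  rw [mul_pow, div_pow, h13]
  set t := x * cx + y * cy
  have hu : (e * (p - r)) ^ 2 = (p - r) ^ 2 := by rw [mul_pow, he, one_mul]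
  set u := e * (p - r)
  nlinarith [sq_nonneg (3 * u / 2 - t), sq_nonneg (3 * u - t), sq_nonneg (3 * u / 4 - t)]

theorem psd_bound (A : Matrix (Fin 2) (Fin 2) ℂ) (hA : A.PosSemidef) (i0 i1 i2 i3 : Fin 2) :
    sg i0 * ((A 0 0).re - (A 1 1).re) / 2 + 3 / 4 * ((A 0 1).re * (sg i1 - (sg i2 + sg i3) / 2)
      + (A 0 1).im * (Real.sqrt 3 / 2 * (sg i2 - sg i3)))
      ≤ Real.sqrt 13 / 4 * ((A 0 0).re + (A 1 1).re) := by
  have h3 : Real.sqrt 3 ^ 2 = 3 := Real.sq_sqrt (by norm_num)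
  have h0 := hA.diag_nonneg (i := 0)
  have h1 := hA.diag_nonneg (i := 1)
  have hd := hA.det_nonneg
  have hh : A 1 0 = star (A 0 1) := (hA.isHermitian.apply 1 0).symm
  rw [Complex.nonneg_iff] at h0 h1 hd
  rw [Matrix.det_fin_two, hh] at hd
  apply real_bound _ _ _ _ _ _ _ h0.1 h1.1
  · have := hd.1
    simp [← h0.2, ← h1.2] at this
    nlinarith
  · unfold sg; split_ifs <;> norm_num
  · unfold sg; split_ifs <;> nlinarith

theorem main_bound (s : ℝ)
    (h : CompatibleFamily (fun _ => 2)
          (fun x i => s • M7 x i + ((1 - s) / 2 : ℝ) • (1 : Matrix (Fin 2) (Fin 2) ℂ))) :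
    s ≤ 2 / Real.sqrt 13 := by
  obtain ⟨J, ⟨hJ, hsum⟩, hm⟩ := h
  have key : ∀ x : Fin 4, s • (M7 x 0 - M7 x 1) = ∑ j, sg (j x) • J j := by
    intro x
    have a := hm x 0
    have b := hm x 1
    have : s • (M7 x 0 - M7 x 1) = (s • M7 x 0 + ((1 - s) / 2 : ℝ) • (1 : Matrix (Fin 2) (Fin 2) ℂ))
      - (s • M7 x 1 + ((1 - s) / 2 : ℝ) • (1 : Matrix (Fin 2) (Fin 2) ℂ)) := by
      rw [smul_sub]; abel
    rw [this]
    refine (congrArg₂ (· - ·) a b).trans ?_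
    simp only
    rw [← Finset.sum_sub_distrib]
    refine Finset.sum_congr rfl fun j _ => ?_
    generalize (j x) = i
    fin_cases i <;> simp [sg]
  have ent : ∀ (x : Fin 4) (a b : Fin 2),
      s * (M7 x 0 a b - M7 x 1 a b).re = ∑ j, sg (j x) * (J j a b).re ∧
      s * (M7 x 0 a b - M7 x 1 a b).im = ∑ j, sg (j x) * (J j a b).im := by
    intro x a b
    have := congrFun (congrFun (key x) a) b
    rw [Matrix.sum_apply] at this
    constructor
    · have := congrArg Complex.re this
      simpa [Complex.re_sum] using this
    · have := congrArg Complex.im this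
      simpa [Complex.im_sum] using this
  have tr : ∀ a : Fin 2, ∑ j, (J j a a).re = 1 := by
    intro a
    have := congrArg Complex.re (congrFun (congrFun hsum a) a)
    rw [Matrix.sum_apply] at this
    simpa [Complex.re_sum] using this
  have hle := Finset.sum_le_sum (s := Finset.univ) fun j _ =>
    psd_bound (J j) (hJ j) (j 0) (j 1) (j 2) (j 3)
  have hr : ∑ j, Real.sqrt 13 / 4 * ((J j 0 0).re + (J j 1 1).re) = Real.sqrt 13 / 2 := by
    rw [← Finset.mul_sum, Finset.sum_add_distrib, tr, tr]; ring
  rw [hr] at hle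
  have e0 := (ent 0 0 0).1
  have e1 := (ent 0 1 1).1
  have f := (ent 1 0 1).1
  have g := (ent 2 0 1).1
  have g' := (ent 2 0 1).2
  have k := (ent 3 0 1).1
  have k' := (ent 3 0 1).2
  have hl : ∑ j : Fin 4 → Fin 2, (sg (j 0) * ((J j 0 0).re - (J j 1 1).re) / 2
      + 3 / 4 * ((J j 0 1).re * (sg (j 1) - (sg (j 2) + sg (j 3)) / 2)
      + (J j 0 1).im * (Real.sqrt 3 / 2 * (sg (j 2) - sg (j 3))))) =
      1/2 * (∑ j, sg (j 0) * (J j 0 0).re) - 1/2 * (∑ j, sg (j 0) * (J j 1 1).re)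
      + 3/4 * (∑ j, sg (j 1) * (J j 0 1).re) - 3/8 * (∑ j, sg (j 2) * (J j 0 1).re)
      - 3/8 * (∑ j, sg (j 3) * (J j 0 1).re)
      + 3/8 * Real.sqrt 3 * (∑ j, sg (j 2) * (J j 0 1).im)
      - 3/8 * Real.sqrt 3 * (∑ j, sg (j 3) * (J j 0 1).im) := by
    simp only [Finset.mul_sum, ← Finset.sum_add_distrib, ← Finset.sum_sub_distrib]
    refine Finset.sum_congr rfl fun j _ => ?_
    ring
  rw [hl, ← e0, ← e1, ← f, ← g, ← g', ← k, ← k'] at hle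
  have h3 : Real.sqrt 3 ^ 2 = 3 := Real.sq_sqrt (by norm_num)
  have h13 : Real.sqrt 13 ^ 2 = 13 := Real.sq_sqrt (by norm_num)
  have hp : 0 < Real.sqrt 13 := by positivity
  simp [M7, om_re, om_im] at hle
  have h4 : s * 13 / 4 ≤ Real.sqrt 13 / 2 := by nlinarith
  rw [le_div_iff₀ hp]
  nlinarith

/-- If `s ∈ [0,1]` makes the noisy versions of the four POVMs `E, F, G, H` compatible, then
`s ≤ 2/√13`.  Consequently, `s_ℂ(2,4,(2,2,2,2)) ≤ 2/√13`. -/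
theorem stmt_7 :
    (∀ s ∈ Set.Icc (0 : ℝ) 1,
        CompatibleFamily (fun _ => 2)
          (fun x i => s • M7 x i + ((1 - s) / 2 : ℝ) • (1 : Matrix (Fin 2) (Fin 2) ℂ)) →
        s ≤ 2 / Real.sqrt 13) ∧
    sInf {t : ℝ | ∃ E : Fin 4 → Fin 2 → Matrix (Fin 2) (Fin 2) ℂ,
        (∀ x, IsPOVM (E x)) ∧ t = compatDeg (fun _ => 2) E}
      ≤ 2 / Real.sqrt 13 := by
  refine ⟨fun s _ h => main_bound s h, ?_⟩
  have hb : compatDeg (fun _ => 2) M7 ≤ 2 / Real.sqrt 13 := by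
    apply Real.sSup_le
    · rintro s ⟨_, h⟩
      exact main_bound s (by simpa using h)
    · positivity
  refine le_trans (csInf_le ⟨0, ?_⟩ ⟨M7, M7_povm, rfl⟩) hb
  rintro t ⟨E, _, rfl⟩
  exact Real.sSup_nonneg fun s hs => hs.1.1
end

section
/- Let g ≥ 1, d ≥ 1 and k_1,…,k_g ≥ 2 be integers. Consider the supremum of λ_max(Σ_{x=1}^g Σ_{i=1}^{k_x−1} A_{i|x} ⊗ X_{i|x}) over all families of d×d complex Hermitian matrices A_{i|x} and X_{i|x} (i ∈ [k_x−1], x ∈ [g]) subject to: −(k_x/2)·A_{i|x} ≼ I_d for all i ∈ [k_x−1] and x ∈ [g]; (k_x/2)·Σ_{i=1}^{k_x−1} A_{i|x} ≼ I_d for all x ∈ [g]; and Σ_{x=1}^g Σ_{i=1}^{k_x−1} (−2/k_x + 2δ_{i,j_x})·X_{i|x} ≼ I_d for every multi-index j ∈ [k_1]×⋯×[k_g]. Then this supremum equals 1/s_ℂ(d, g, (k_1,…,k_g)), the reciprocal of the minimum compatibility degree. -/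
open Matrix
open scoped Kronecker ComplexOrder

/-- The largest eigenvalue of a (Hermitian) complex matrix, as the supremum of its real
eigenvalues. -/
noncomputable def lambdaMaxC {m : Type*} [Fintype m] (M : Matrix m m ℂ) : ℝ :=
  sSup {t : ℝ | ∃ v : m → ℂ, v ≠ 0 ∧ M.mulVec v = (t : ℂ) • v}

/-- The minimum compatibility degree `s_ℂ(d,g,(k_1,…,k_g))`: the infimum of the compatibility
degrees over all `g`-tuples of `d`-dimensional POVMs with `k_1, …, k_g` outcomes. -/
noncomputable def minCompatDeg (d g : ℕ) (k : Fin g → ℕ) : ℝ :=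
  sInf {t : ℝ | ∃ E : (x : Fin g) → Fin (k x) → Matrix (Fin d) (Fin d) ℂ,
    (∀ x, IsPOVM (E x)) ∧ t = compatDeg k E}


attribute [local instance] Matrix.normedAddCommGroup Matrix.normedSpace

namespace Stmt19

lemma psd_smul {m : Type*} [Fintype m] {M : Matrix m m ℂ} (h : M.PosSemidef) {r : ℝ} (hr : 0 ≤ r) :
    (r • M).PosSemidef := h.smul hr

lemma herm_smul {m : Type*} {M : Matrix m m ℂ} (h : M.IsHermitian) (r : ℝ) :
    (r • M).IsHermitian := by
  unfold Matrix.IsHermitian at *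
  rw [Matrix.conjTranspose_smul, h]; simp

lemma herm_sum {m ι : Type*} (s : Finset ι) {M : ι → Matrix m m ℂ} (h : ∀ i, (M i).IsHermitian) :
    (∑ i ∈ s, M i).IsHermitian := by
  unfold Matrix.IsHermitian at *
  rw [Matrix.conjTranspose_sum]; simp [h]

lemma eig_bdd {m : Type*} [Fintype m] (M : Matrix m m ℂ) :
    BddAbove {t : ℝ | ∃ v : m → ℂ, v ≠ 0 ∧ M.mulVec v = (t : ℂ) • v} := by
  apply Set.Finite.bddAbove
  have hf := Module.End.finite_hasEigenvalue (f := Matrix.mulVecLin M)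
  have := hf.preimage (f := fun t : ℝ => (t : ℂ)) (by intro a _ b _ h; simpa using h)
  refine this.subset ?_
  rintro t ⟨v, hv, h⟩
  simp only [Set.mem_preimage, Set.mem_ofPred_eq]
  exact Module.End.hasEigenvalue_of_hasEigenvector
    ⟨Module.End.mem_eigenspace_iff.mpr (by simpa using h), hv⟩

lemma lambda_psd {m : Type*} [Fintype m] [DecidableEq m] {M : Matrix m m ℂ} (hM : M.IsHermitian) :
    (lambdaMaxC M • (1 : Matrix m m ℂ) - M).PosSemidef := by
  have hH : (lambdaMaxC M • (1 : Matrix m m ℂ) - M).IsHermitian :=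
    (herm_smul isHermitian_one _).sub hM
  rw [hH.posSemidef_iff_eigenvalues_nonneg]
  intro i
  have hv := hH.mulVec_eigenvectorBasis i
  have hne : (hH.eigenvectorBasis i : m → ℂ) ≠ 0 := by
    have := hH.eigenvectorBasis.orthonormal.ne_zero i
    intro h
    apply this
    ext a
    exact congrFun h a
  have : lambdaMaxC M - hH.eigenvalues i ≤ lambdaMaxC M := by
    apply le_csSup (eig_bdd M)
    refine ⟨_, hne, ?_⟩
    rw [Matrix.sub_mulVec, Matrix.smul_mulVec, Matrix.one_mulVec] at hv
    ext a
    have := congrFun hv a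
    simp at this ⊢
    linear_combination -this
  simp only [Pi.zero_apply]
  linarith

lemma lambda_le {m : Type*} [Fintype m] [DecidableEq m] {M : Matrix m m ℂ} {c : ℝ} (hc : 0 ≤ c)
    (h : (c • (1 : Matrix m m ℂ) - M).PosSemidef) : lambdaMaxC M ≤ c := by
  apply Real.sSup_le _ hc
  rintro t ⟨v, hv, he⟩
  have h1 := h.dotProduct_mulVec_nonneg v
  rw [Matrix.sub_mulVec, Matrix.smul_mulVec, Matrix.one_mulVec, he] at h1
  have h2 : c • v - (t : ℂ) • v = ((c - t : ℝ) : ℂ) • v := by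
    ext a; simp; ring
  rw [h2, dotProduct_smul] at h1
  have h3 : 0 < star v ⬝ᵥ v := dotProduct_star_self_pos_iff.mpr hv
  rw [Complex.lt_def] at h3
  rw [Complex.le_def] at h1
  have h4 := h1.1
  simp only [smul_eq_mul, Complex.zero_re, Complex.re_ofReal_mul] at h4
  have h5 := h3.1
  simp only [Complex.zero_re] at h5
  by_contra hcon
  push Not at hcon
  nlinarith

/-- real functional representation -/
lemma repr_fun {d : ℕ} (φ : Matrix (Fin d) (Fin d) ℂ →ₗ[ℝ] ℝ) :
    ∃ H : Matrix (Fin d) (Fin d) ℂ, H.IsHermitian ∧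
      ∀ B : Matrix (Fin d) (Fin d) ℂ, B.IsHermitian → φ B = (Matrix.trace (B * H)).re := by
  let G : Matrix (Fin d) (Fin d) ℂ := fun b a =>
    (φ (Matrix.single a b 1) : ℂ) - Complex.I * (φ (Matrix.single a b Complex.I) : ℂ)
  have hG : ∀ B : Matrix (Fin d) (Fin d) ℂ, φ B = (Matrix.trace (B * G)).re := by
    intro B
    conv_lhs => rw [Matrix.matrix_eq_sum_single B]
    simp only [map_sum, Matrix.trace, Matrix.diag, Matrix.mul_apply, Complex.re_sum]
    refine Finset.sum_congr rfl fun a _ => Finset.sum_congr rfl fun b _ => ?_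
    have : Matrix.single a b (B a b) = (B a b).re • Matrix.single a b (1:ℂ)
        + (B a b).im • Matrix.single a b Complex.I := by
      simp only [Matrix.smul_single, ← Matrix.single_add]
      congr 1
      apply Complex.ext <;> simp
    rw [this, map_add, map_smul, map_smul]
    simp [G]
  refine ⟨(1/2 : ℝ) • (G + Gᴴ), ?_, ?_⟩
  · apply herm_smul
    exact Matrix.isHermitian_add_transpose_self G
  · intro B hB
    rw [hG, Matrix.mul_smul, Matrix.trace_smul, mul_add, Matrix.trace_add]
    have : (Matrix.trace (B * Gᴴ)).re = (Matrix.trace (B * G)).re := by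
      have h1 : B * Gᴴ = (G * B)ᴴ := by rw [Matrix.conjTranspose_mul, hB.eq]
      rw [h1, Matrix.trace_conjTranspose, Matrix.trace_mul_comm]
      simp
    simp [this]
    ring

lemma entry_bound {d : ℕ} {M : Matrix (Fin d) (Fin d) ℂ} (h : M.PosSemidef) (a b : Fin d) :
    ‖M a b‖ ≤ 2 * (Matrix.trace M).re := by
  have hd : ∀ c, 0 ≤ (M c c).re := fun c => (Complex.le_def.mp h.diag_nonneg).1
  have ht : (Matrix.trace M).re = ∑ c, (M c c).re := by simp [Matrix.trace]
  have hc : ∀ c, (M c c).re ≤ (Matrix.trace M).re := by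
    intro c; rw [ht]
    exact Finset.single_le_sum (f := fun c => (M c c).re) (fun i _ => hd i) (Finset.mem_univ c)
  have hherm : M b a = star (M a b) := by rw [h.1.apply]
  have key : ∀ w : ℂ, 0 ≤ (M a a).re + Complex.normSq w * (M b b).re + 2 * (w * M a b).re := by
    intro w
    have := (Complex.le_def.mp (h.dotProduct_mulVec_nonneg (Pi.single a 1 + Pi.single b w))).1
    have e : star (Pi.single a 1 + Pi.single b w) ⬝ᵥ M *ᵥ (Pi.single a 1 + Pi.single b w)
      = M a a + M a b * w + star w * M b a + star w * w * M b b := by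
      rw [star_add, Matrix.mulVec_add, add_dotProduct, dotProduct_add, dotProduct_add]
      simp
      ring
    rw [e, hherm] at this
    simp [Complex.normSq_apply] at this ⊢
    nlinarith
  have h1 := key 1
  have h2 := key (-1)
  have h3 := key Complex.I
  have h4 := key (-Complex.I)
  simp at h1 h2 h3 h4
  have ha := hc a
  have hb := hc b
  refine (Complex.norm_le_abs_re_add_abs_im _).trans ?_
  have : |(M a b).re| ≤ (Matrix.trace M).re := abs_le.mpr ⟨by linarith, by linarith⟩
  have : |(M a b).im| ≤ (Matrix.trace M).re := abs_le.mpr ⟨by linarith, by linarith⟩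
  linarith

lemma psd_closed {d : ℕ} : IsClosed {M : Matrix (Fin d) (Fin d) ℂ | M.PosSemidef} := by
  have : {M : Matrix (Fin d) (Fin d) ℂ | M.PosSemidef} =
      {M | Mᴴ = M} ∩ ⋂ x : Fin d → ℂ, {M | 0 ≤ star x ⬝ᵥ (M *ᵥ x)} := by
    ext M; simp [Matrix.posSemidef_iff_dotProduct_mulVec, Matrix.IsHermitian]
  rw [this]
  refine (isClosed_eq (by fun_prop) (by fun_prop)).inter (isClosed_iInter fun x => ?_)
  refine isClosed_le continuous_const ?_
  fun_prop

lemma base_compact {d : ℕ} {ι : Type*} [Fintype ι] (T : ℝ) :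
    IsCompact {J : ι → Matrix (Fin d) (Fin d) ℂ |
      (∀ j, (J j).PosSemidef) ∧ ∑ j, (Matrix.trace (J j)).re = T} := by
  apply Metric.isCompact_of_isClosed_isBounded
  · refine IsClosed.inter (s₁ := {J : ι → Matrix (Fin d) (Fin d) ℂ | ∀ j, (J j).PosSemidef})
      (s₂ := {J | ∑ j, (Matrix.trace (J j)).re = T}) ?_ ?_
    · have : {J : ι → Matrix (Fin d) (Fin d) ℂ | ∀ j, (J j).PosSemidef} =
        ⋂ j, (fun J => J j) ⁻¹' {M : Matrix (Fin d) (Fin d) ℂ | M.PosSemidef} := by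
        ext; simp
      rw [this]
      exact isClosed_iInter fun j => psd_closed.preimage (continuous_apply j)
    · refine isClosed_eq ?_ continuous_const
      fun_prop
  · rw [isBounded_iff_forall_norm_le]
    refine ⟨2 * |T|, ?_⟩
    rintro J ⟨h1, h2⟩
    rw [pi_norm_le_iff_of_nonneg (by positivity)]
    intro j
    rw [Matrix.norm_le_iff (by positivity)]
    intro a b
    refine (entry_bound (h1 j) a b).trans ?_
    have : (Matrix.trace (J j)).re ≤ T := by
      rw [← h2]
      exact Finset.single_le_sum (f := fun j => (Matrix.trace (J j)).re)
        (fun i _ => (Complex.le_def.mp (h1 i).trace_nonneg).1) (Finset.mem_univ j)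
    have := le_abs_self T
    linarith

lemma psd_of_trace {d : ℕ} {M : Matrix (Fin d) (Fin d) ℂ} (hM : M.IsHermitian)
    (h : ∀ J : Matrix (Fin d) (Fin d) ℂ, J.PosSemidef → 0 ≤ (Matrix.trace (J * M)).re) :
    M.PosSemidef := by
  refine Matrix.PosSemidef.of_dotProduct_mulVec_nonneg hM fun x => ?_
  have h1 := h _ (Matrix.posSemidef_vecMulVec_self_star x)
  have h2 : Matrix.trace (vecMulVec x (star x) * M) = star x ⬝ᵥ (M *ᵥ x) := by
    rw [Matrix.vecMulVec_mul, Matrix.trace_vecMulVec, dotProduct_comm, Matrix.dotProduct_mulVec]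
  rw [h2] at h1
  have h3 : (star x ⬝ᵥ (M *ᵥ x)).im = 0 := hM.im_star_dotProduct_mulVec_self x
  rw [Complex.le_def]
  exact ⟨h1, h3.symm⟩

lemma cone_sep {d : ℕ} {ι κ : Type*} [Fintype ι] [DecidableEq ι] [Fintype κ] [DecidableEq κ]
    (C : κ → ι → ℝ) (o : ι) (hC : ∀ j, C j o = 1) (P : ι → Matrix (Fin d) (Fin d) ℂ)
    (hP : ∀ i, (P i).IsHermitian) (hT : 0 < (Matrix.trace (P o)).re)
    (hno : ¬ ∃ J : κ → Matrix (Fin d) (Fin d) ℂ, (∀ j, (J j).PosSemidef) ∧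
      ∀ i, P i = ∑ j, C j i • J j) :
    ∃ Y : ι → Matrix (Fin d) (Fin d) ℂ, (∀ i, (Y i).IsHermitian) ∧
      (∀ j, (∑ i, C j i • Y i).PosSemidef) ∧ ∑ i, (Matrix.trace (P i * Y i)).re < 0 := by
  set T := (Matrix.trace (P o)).re with hTdef
  let L : (κ → Matrix (Fin d) (Fin d) ℂ) →ₗ[ℝ] (ι → Matrix (Fin d) (Fin d) ℂ) :=
    { toFun := fun J i => ∑ j, C j i • J j
      map_add' := by intro x y; ext1 i; simp [Finset.sum_add_distrib]
      map_smul' := by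
        intro r x; ext1 i; simp only [Pi.smul_apply, RingHom.id_apply, Finset.smul_sum]
        exact Finset.sum_congr rfl fun j _ => smul_comm _ _ _ }
  have hLapp : ∀ J i, L J i = ∑ j, C j i • J j := fun _ _ => rfl
  let K : Set (κ → Matrix (Fin d) (Fin d) ℂ) :=
    {J | (∀ j, (J j).PosSemidef) ∧ ∑ j, (Matrix.trace (J j)).re = T}
  have hK : IsCompact K := base_compact T
  have hKc : Convex ℝ K := by
    rintro x ⟨hx1, hx2⟩ y ⟨hy1, hy2⟩ a b ha hb hab
    refine ⟨fun j => (psd_smul (hx1 j) ha).add (psd_smul (hy1 j) hb), ?_⟩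
    have : ∀ j, (Matrix.trace ((a • x + b • y) j)).re =
      a * (Matrix.trace (x j)).re + b * (Matrix.trace (y j)).re := by
      intro j; simp [Matrix.trace_add, Matrix.trace_smul]
    simp only [this, Finset.sum_add_distrib, ← Finset.mul_sum, hx2, hy2]
    rw [← add_mul, hab, one_mul]
  have hLc : Continuous L := by
    refine continuous_pi fun i => ?_
    simp only [hLapp]
    fun_prop
  have hS : IsClosed (L '' K) := (hK.image hLc).isClosed
  have hSc : Convex ℝ (L '' K) := hKc.linear_image L
  have hPS : P ∉ L '' K := by
    rintro ⟨J, hJ, h⟩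
    exact hno ⟨J, hJ.1, fun i => by rw [← h]; rfl⟩
  have : LocallyConvexSpace ℝ (ι → Matrix (Fin d) (Fin d) ℂ) :=
    inferInstanceAs (LocallyConvexSpace ℝ (ι → Fin d → Fin d → ℂ))
  obtain ⟨f, u, hf1, hf2⟩ := geometric_hahn_banach_closed_point hSc hS hPS
  -- the linear functional
  let trRe : Matrix (Fin d) (Fin d) ℂ →ₗ[ℝ] ℝ :=
    Complex.reLm ∘ₗ (Matrix.traceLinearMap (Fin d) ℝ ℂ)
  have htr : ∀ M, trRe M = (Matrix.trace M).re := fun _ => rfl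
  let h : (ι → Matrix (Fin d) (Fin d) ℂ) →ₗ[ℝ] ℝ :=
    (u / T) • (trRe ∘ₗ LinearMap.proj o) - f.toLinearMap
  have hh : ∀ B, h B = (u / T) * (Matrix.trace (B o)).re - f B := fun _ => rfl
  have hhP : h P < 0 := by
    rw [hh, ← hTdef, div_mul_cancel₀ _ hT.ne']; linarith
  have hpos : ∀ j (M : Matrix (Fin d) (Fin d) ℂ), M.PosSemidef → 0 ≤ h (L (Pi.single j M)) := by
    intro j M hM
    have h0 : 0 ≤ (Matrix.trace M).re := (Complex.le_def.mp hM.trace_nonneg).1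
    rcases h0.eq_or_lt with h0 | h0
    · have : M = 0 := by
        rw [← hM.trace_eq_zero_iff]
        apply Complex.ext
        · exact h0.symm
        · exact (Complex.le_def.mp hM.trace_nonneg).2.symm
      simp [this]
    · set τ := (Matrix.trace M).re with hτ
      have hmem : Pi.single j ((T / τ) • M) ∈ K := by
        refine ⟨fun j' => ?_, ?_⟩
        · by_cases hj : j' = j
          · subst hj; simpa using psd_smul hM (by positivity)
          · simpa [hj] using Matrix.PosSemidef.zero
        · rw [Finset.sum_eq_single j]
          · simp only [Pi.single_eq_same, Matrix.trace_smul, Complex.smul_re, smul_eq_mul, ← hτ]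
            field_simp
          · intro b _ hb; simp [hb]
          · simp
      have h1 := hf1 _ ⟨_, hmem, rfl⟩
      have h2 : 0 ≤ h (L (Pi.single j ((T / τ) • M))) := by
        have : (Matrix.trace (L (Pi.single j ((T / τ) • M)) o)).re = T := by
          rw [hLapp, Matrix.trace_sum, Complex.re_sum]
          simp only [hC, one_smul]
          exact hmem.2
        rw [hh, this, div_mul_cancel₀ _ hT.ne']; linarith
      rw [Pi.single_smul', map_smul, map_smul, smul_eq_mul] at h2
      exact nonneg_of_mul_nonneg_right h2 (by positivity)
  choose Y hY1 hY2 using fun i => repr_fun (h ∘ₗ LinearMap.single ℝ (fun _ => Matrix (Fin d) (Fin d) ℂ) i)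
  have hrep : ∀ B : ι → Matrix (Fin d) (Fin d) ℂ, (∀ i, (B i).IsHermitian) →
      h B = ∑ i, (Matrix.trace (B i * Y i)).re := by
    intro B hB
    have : B = ∑ i, Pi.single i (B i) := (Finset.univ_sum_single B).symm
    conv_lhs => rw [this]
    rw [map_sum]
    refine Finset.sum_congr rfl fun i _ => ?_
    rw [← hY2 i _ (hB i)]; rfl
  refine ⟨Y, hY1, fun j => ?_, ?_⟩
  · apply psd_of_trace
    · exact herm_sum _ fun i => herm_smul (hY1 i) _
    · intro M hM
      have h1 := hpos j M hM
      have h2 : ∀ i, L (Pi.single j M) i = C j i • M := by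
        intro i
        rw [hLapp, Finset.sum_eq_single j]
        · simp
        · intro b _ hb; simp [hb]
        · simp
      rw [hrep _ (fun i => by rw [h2]; exact herm_smul hM.1 _)] at h1
      rw [Matrix.mul_sum, Matrix.trace_sum, Complex.re_sum]
      convert h1 using 2 with i
      rw [h2, Matrix.mul_smul, Matrix.smul_mul]
  · rw [← hrep P hP]; exact hhP

lemma exists_sqrt {d : ℕ} {Z : Matrix (Fin d) (Fin d) ℂ} (hZ : Z.PosDef) :
    ∃ B : Matrix (Fin d) (Fin d) ℂ, IsUnit B.det ∧ Z = Bᴴ * B := by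
  open scoped MatrixOrder Matrix.Norms.L2Operator in
  obtain ⟨a, ha⟩ := CStarAlgebra.nonneg_iff_eq_star_mul_self.mp hZ.posSemidef.nonneg
  refine ⟨a, ?_, ha⟩
  have h1 := hZ.isUnit
  rw [Matrix.isUnit_iff_isUnit_det, ha, Matrix.det_mul] at h1
  exact isUnit_of_mul_isUnit_right h1

/-- coefficients -/
noncomputable abbrev cf {g : ℕ} (k : Fin g → ℕ) (j : (x : Fin g) → Fin (k x)) (x : Fin g)
    (i : Fin (k x - 1)) : ℝ :=
  (-2 / (k x : ℝ)) + (if (i : ℕ) = ((j x : ℕ)) then 2 else 0)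

/-- embedding of outcomes -/
def emb {n : ℕ} (i : Fin (n - 1)) : Fin n := Fin.castLE (Nat.sub_le n 1) i

lemma cf_eq {g : ℕ} (k : Fin g → ℕ) (j : (x : Fin g) → Fin (k x)) (x : Fin g)
    (i : Fin (k x - 1)) : cf k j x i = 2 * (if j x = emb i then 1 else 0) - 2 / (k x : ℝ) := by
  have : ((i : ℕ) = (j x : ℕ)) ↔ j x = emb i := by
    simp [emb, Fin.ext_iff, eq_comm]
  simp only [cf, this]
  split_ifs <;> ring

lemma sum_split {g : ℕ} (k : Fin g → ℕ) {M : Type*} [AddCommGroup M] [Module ℝ M] (y : Fin g)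
    (H : ((z : {z : Fin g // z ≠ y}) → Fin (k z)) → ℝ) (f : Fin (k y) → M) :
    ∑ j : (x : Fin g) → Fin (k x), H (fun z => j z) • f (j y) = (∑ r, H r) • ∑ a, f a := by
  rw [← (Equiv.piSplitAt y (fun x => Fin (k x))).symm.sum_comp, Fintype.sum_prod_type_right,
    Finset.sum_smul]
  refine Finset.sum_congr rfl fun r _ => ?_
  rw [Finset.smul_sum]
  refine Finset.sum_congr rfl fun a _ => ?_
  have h1 : (Equiv.piSplitAt y (fun x => Fin (k x))).symm (a, r) y = a := by
    simp [Equiv.piSplitAt]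
  have h2 : (fun z : {z : Fin g // z ≠ y} => (Equiv.piSplitAt y (fun x => Fin (k x))).symm (a, r) z) = r := by
    funext z
    simp [Equiv.piSplitAt, z.2]
  rw [h1, h2]

lemma sum_one {g : ℕ} (k : Fin g → ℕ) {M : Type*} [AddCommGroup M] [Module ℝ M] (y : Fin g)
    (f : Fin (k y) → M) (hk : k y ≠ 0) :
    ∑ j : (x : Fin g) → Fin (k x), f (j y) =
      ((Fintype.card ((x : Fin g) → Fin (k x)) : ℝ) / (k y : ℝ)) • ∑ a, f a := by
  have h1 := sum_split k y (fun _ => 1) f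
  have h2 := sum_split k y (fun _ => 1) (fun _ => (1 : ℝ))
  simp only [one_smul, Finset.sum_const, Finset.card_univ, nsmul_eq_mul, mul_one,
    Fintype.card_fin, smul_eq_mul] at h1 h2
  rw [h1, h2]
  congr 1
  have : (k y : ℝ) ≠ 0 := by exact_mod_cast hk
  field_simp

lemma sum_two {g : ℕ} (k : Fin g → ℕ) {M : Type*} [AddCommGroup M] [Module ℝ M] {x y : Fin g}
    (hxy : x ≠ y) (i : Fin (k x)) (f : Fin (k y) → M) (hf : ∑ a, f a = 0) :
    ∑ j : (x : Fin g) → Fin (k x), (if j x = i then f (j y) else 0) = 0 := by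
  have h1 := sum_split k y (fun r => if r ⟨x, hxy⟩ = i then 1 else 0) f
  rw [hf, smul_zero] at h1
  refine (Finset.sum_congr rfl fun j _ => ?_).trans h1
  by_cases h : j x = i <;> simp [h]

lemma cf_sum {g : ℕ} (k : Fin g → ℕ) (hk : ∀ x, 2 ≤ k x) (x : Fin g) (i : Fin (k x - 1)) :
    ∑ j, cf k j x i = 0 := by
  have hx : k x ≠ 0 := by have := hk x; omega
  have hx' : (k x : ℝ) ≠ 0 := by exact_mod_cast hx
  have := sum_one k x (fun a : Fin (k x) => (2 * (if a = emb i then 1 else 0) - 2 / (k x : ℝ))) hx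
  simp only [cf_eq]
  rw [this]
  rw [Finset.sum_sub_distrib, ← Finset.mul_sum]
  simp
  right
  field_simp
  ring

lemma kron_form {d : ℕ} (A X V : Matrix (Fin d) (Fin d) ℂ) :
    star (vec Vᵀ) ⬝ᵥ ((A ⊗ₖ Xᵀ) *ᵥ vec Vᵀ) = Matrix.trace (A * (V * X * Vᴴ)) := by
  rw [Matrix.kronecker_mulVec_vec, Matrix.star_vec_dotProduct_vec]
  rw [← Matrix.trace_transpose]
  simp only [Matrix.transpose_mul, Matrix.transpose_transpose, Matrix.mul_assoc]
  rfl

lemma lower_sep {g d : ℕ} (hd : 1 ≤ d) (k : Fin g → ℕ) (hk : ∀ x, 2 ≤ k x) {s : ℝ} (hs : 0 < s)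
    (A : (x : Fin g) → Fin (k x - 1) → Matrix (Fin d) (Fin d) ℂ) (hA : ∀ x i, (A x i).IsHermitian)
    (hno : ¬ ∃ J : ((y : Fin g) → Fin (k y)) → Matrix (Fin d) (Fin d) ℂ, IsPOVM J ∧
      ∀ x i, s • A x i = ∑ j, cf k j x i • J j) :
    ∃ X : (x : Fin g) → Fin (k x - 1) → Matrix (Fin d) (Fin d) ℂ,
      (∀ x i, (X x i).IsHermitian) ∧
      (∀ j : (x : Fin g) → Fin (k x), ((1 : Matrix (Fin d) (Fin d) ℂ) -
            ∑ x, ∑ i : Fin (k x - 1), cf k j x i • X x i).PosSemidef) ∧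
      1 / s ≤ lambdaMaxC (∑ x, ∑ i, A x i ⊗ₖ X x i) := by
  have hd0 : (0:ℝ) < d := by exact_mod_cast hd
  obtain ⟨Y, hY1, hY2, hY3⟩ := cone_sep (d := d) (ι := Option (Σ x : Fin g, Fin (k x - 1)))
    (κ := (y : Fin g) → Fin (k y))
    (fun j p => p.elim 1 (fun q => cf k j q.1 q.2)) none (fun _ => rfl)
    (fun p => p.elim 1 (fun q => s • A q.1 q.2))
    (by
      rintro (_ | q)
      · exact isHermitian_one
      · exact herm_smul (hA _ _) _)
    (by simpa using hd0)
    (by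
      rintro ⟨J, hJ1, hJ2⟩
      apply hno
      refine ⟨J, ⟨hJ1, ?_⟩, fun x i => hJ2 (some ⟨x, i⟩)⟩
      have := hJ2 none
      simpa using this.symm)
  set Z := Y none with hZ
  set y : (x : Fin g) → Fin (k x - 1) → Matrix (Fin d) (Fin d) ℂ := fun x i => Y (some ⟨x, i⟩) with hy
  have hyH : ∀ x i, (y x i).IsHermitian := fun x i => hY1 _
  have hpsd : ∀ j, (Z + ∑ x, ∑ i, cf k j x i • y x i).PosSemidef := by
    intro j
    have := hY2 j
    rw [Fintype.sum_option, Fintype.sum_sigma] at this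
    simpa using this
  have htr : (Matrix.trace Z).re + s * ∑ x, ∑ i, (Matrix.trace (A x i * y x i)).re < 0 := by
    rw [Fintype.sum_option, Fintype.sum_sigma] at hY3
    simpa [Finset.mul_sum, Matrix.trace_smul] using hY3
  have hZpsd : Z.PosSemidef := by
    have h1 := Matrix.posSemidef_sum Finset.univ (fun j _ => hpsd j)
    rw [Finset.sum_add_distrib] at h1
    have h2 : ∑ j, ∑ x, ∑ i, cf k j x i • y x i = 0 := by
      rw [Finset.sum_comm]
      refine Finset.sum_eq_zero fun x _ => ?_
      rw [Finset.sum_comm]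
      refine Finset.sum_eq_zero fun i _ => ?_
      rw [← Finset.sum_smul, cf_sum k hk, zero_smul]
    rw [h2, add_zero, Finset.sum_const, Finset.card_univ, ← Nat.cast_smul_eq_nsmul ℝ] at h1
    have hN : (0 : ℝ) < (Fintype.card ((y : Fin g) → Fin (k y)) : ℝ) := by
      have : Nonempty ((y : Fin g) → Fin (k y)) := ⟨fun y => ⟨0, by have := hk y; omega⟩⟩
      exact_mod_cast Fintype.card_pos
    have h3 := psd_smul h1 (inv_nonneg.mpr hN.le)
    rwa [smul_smul, inv_mul_cancel₀ hN.ne', one_smul] at h3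
  set q := ∑ x, ∑ i, (Matrix.trace (A x i * y x i)).re with hq
  obtain ⟨ε, hε, hεt⟩ : ∃ ε : ℝ, 0 < ε ∧ (Matrix.trace Z).re + ε * d + s * q < 0 := by
    refine ⟨-((Matrix.trace Z).re + s * q) / (2 * d), by apply div_pos <;> linarith, ?_⟩
    have : -((Matrix.trace Z).re + s * q) / (2 * d) * d = -((Matrix.trace Z).re + s * q) / 2 := by
      field_simp
    rw [this]; linarith
  have hZe : (Z + ε • (1 : Matrix (Fin d) (Fin d) ℂ)).PosDef :=
    Matrix.PosDef.posSemidef_add hZpsd (Matrix.PosDef.one.smul hε)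
  obtain ⟨B, hB, hBZ⟩ := exists_sqrt hZe
  have hBB : B⁻¹ * B = 1 := Matrix.nonsing_inv_mul B hB
  have hBB' : B * B⁻¹ = 1 := Matrix.mul_nonsing_inv B hB
  have hBB2 : Bᴴ * (B⁻¹)ᴴ = 1 := by rw [← Matrix.conjTranspose_mul, hBB, conjTranspose_one]
  have hBB3 : (B⁻¹)ᴴ * Bᴴ = 1 := by rw [← Matrix.conjTranspose_mul, hBB', conjTranspose_one]
  let X0 : (x : Fin g) → Fin (k x - 1) → Matrix (Fin d) (Fin d) ℂ :=
    fun x i => -((B⁻¹)ᴴ * y x i * B⁻¹)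
  have hX0 : ∀ x i, (X0 x i).IsHermitian := by
    intro x i
    exact (Matrix.isHermitian_conjTranspose_mul_mul _ (hyH x i)).neg
  have hX0t : ∀ x i, Bᴴ * X0 x i * B = - y x i := by
    intro x i
    calc Bᴴ * X0 x i * B = -((Bᴴ * (B⁻¹)ᴴ) * y x i * (B⁻¹ * B)) := by
          simp only [X0, Matrix.mul_neg, Matrix.neg_mul, Matrix.mul_assoc]
      _ = _ := by rw [hBB2, hBB]; simp
  have hMH : (∑ x, ∑ i, A x i ⊗ₖ (X0 x i)ᵀ).IsHermitian := by
    refine herm_sum _ fun x => herm_sum _ fun i => ?_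
    unfold Matrix.IsHermitian
    rw [Matrix.conjTranspose_kronecker, (hA x i).eq, ((hX0 x i).transpose).eq]
  refine ⟨fun x i => (X0 x i)ᵀ, fun x i => (hX0 x i).transpose, fun j => ?_, ?_⟩
  · have h1 : (1 : Matrix (Fin d) (Fin d) ℂ) - ∑ x, ∑ i, cf k j x i • (X0 x i)ᵀ =
      ((B⁻¹)ᴴ * ((Z + ∑ x, ∑ i, cf k j x i • y x i) + ε • (1 : Matrix (Fin d) (Fin d) ℂ)) * B⁻¹)ᵀ := by
      have e1 : (Z + ∑ x, ∑ i, cf k j x i • y x i) + ε • (1 : Matrix (Fin d) (Fin d) ℂ) =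
        Bᴴ * B + ∑ x, ∑ i, cf k j x i • y x i := by rw [← hBZ]; abel
      have e2 : (B⁻¹)ᴴ * (Bᴴ * B) * B⁻¹ = 1 := by
        calc (B⁻¹)ᴴ * (Bᴴ * B) * B⁻¹ = ((B⁻¹)ᴴ * Bᴴ) * (B * B⁻¹) := by simp only [Matrix.mul_assoc]
          _ = 1 := by rw [hBB3, hBB', one_mul]
      rw [e1, mul_add, add_mul, e2, Matrix.transpose_add, Matrix.transpose_one, sub_eq_add_neg]
      congr 1
      simp only [Matrix.mul_sum, Matrix.sum_mul, Matrix.transpose_sum, ← Finset.sum_neg_distrib]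
      refine Finset.sum_congr rfl fun x _ => Finset.sum_congr rfl fun i _ => ?_
      simp [X0]
    rw [h1]
    exact (((hpsd j).add (psd_smul Matrix.PosSemidef.one hε.le)).conjTranspose_mul_mul_same _).transpose
  · have h1 := (Complex.le_def.mp ((lambda_psd hMH).dotProduct_mulVec_nonneg (vec (Bᴴ)ᵀ))).1
    set l := lambdaMaxC (∑ x, ∑ i, A x i ⊗ₖ (X0 x i)ᵀ) with hl
    have h2 : star (vec (Bᴴ)ᵀ) ⬝ᵥ ((∑ x, ∑ i, A x i ⊗ₖ (X0 x i)ᵀ) *ᵥ vec (Bᴴ)ᵀ)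
        = - ∑ x, ∑ i, Matrix.trace (A x i * y x i) := by
      simp only [Matrix.sum_mulVec, dotProduct_sum, ← Finset.sum_neg_distrib]
      refine Finset.sum_congr rfl fun x _ => Finset.sum_congr rfl fun i _ => ?_
      rw [kron_form, conjTranspose_conjTranspose, hX0t]
      simp
    have h3 : star (vec (Bᴴ)ᵀ) ⬝ᵥ vec (Bᴴ)ᵀ = Matrix.trace (Z + ε • (1 : Matrix (Fin d) (Fin d) ℂ)) := by
      have := kron_form (1 : Matrix (Fin d) (Fin d) ℂ) 1 (Bᴴ)
      rw [Matrix.transpose_one, Matrix.one_kronecker_one, Matrix.one_mulVec] at this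
      rw [this, hBZ]; simp
    rw [Matrix.sub_mulVec, Matrix.smul_mulVec, Matrix.one_mulVec, dotProduct_sub, dotProduct_smul,
      h2, h3] at h1
    have h4 : (Matrix.trace (Z + ε • (1 : Matrix (Fin d) (Fin d) ℂ))).re =
      (Matrix.trace Z).re + ε * d := by simp [Matrix.trace_add, Matrix.trace_smul]
    have h5 : (∑ x, ∑ i, Matrix.trace (A x i * y x i)).re = q := by simp [hq, Complex.re_sum]
    rw [Complex.sub_re, Complex.neg_re, h5, Complex.smul_re, h4] at h1
    simp only [Complex.zero_re, smul_eq_mul] at h1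
    have h6 : 0 ≤ (Matrix.trace Z).re := (Complex.le_def.mp hZpsd.trace_nonneg).1
    have h7 : 0 < (Matrix.trace Z).re + ε * d := by positivity
    rw [div_le_iff₀ hs]
    by_contra hcon
    push Not at hcon
    set w := (Matrix.trace Z).re + ε * d with hw
    have h8 : l * s * w < 1 * w := mul_lt_mul_of_pos_right hcon h7
    have h9 : 0 ≤ s * (l * w - -q) := mul_nonneg hs.le h1
    nlinarith

lemma sum_last {n : ℕ} (hn : 2 ≤ n) {M : Type*} [AddCommGroup M] (f : Fin n → M) :
    ∑ i, f i = ∑ i : Fin (n - 1), f (emb i) + f ⟨n - 1, by omega⟩ := by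
  obtain ⟨m, rfl⟩ : ∃ m, n = m + 1 := ⟨n - 1, by omega⟩
  exact Fin.sum_univ_castSucc f

lemma cases_last {n : ℕ} (hn : 2 ≤ n) (i : Fin n) :
    (∃ i', i = emb i') ∨ i = ⟨n - 1, by omega⟩ := by
  by_cases h : (i : ℕ) < n - 1
  · exact Or.inl ⟨⟨i, h⟩, rfl⟩
  · right; ext; have := i.2; simp; omega

/-- the `A` tuple attached to a tuple of POVMs -/
noncomputable def toA {g d : ℕ} (k : Fin g → ℕ)
    (E : (x : Fin g) → Fin (k x) → Matrix (Fin d) (Fin d) ℂ) (x : Fin g) (i : Fin (k x - 1)) :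
    Matrix (Fin d) (Fin d) ℂ :=
  (2 : ℝ) • E x (emb i) - (2 / (k x : ℝ)) • (1 : Matrix (Fin d) (Fin d) ℂ)

lemma toA_feas {g d : ℕ} (k : Fin g → ℕ) (hk : ∀ x, 2 ≤ k x)
    (E : (x : Fin g) → Fin (k x) → Matrix (Fin d) (Fin d) ℂ) (hE : ∀ x, IsPOVM (E x)) :
    (∀ x i, (toA k E x i).IsHermitian) ∧
    (∀ x i, ((1 : Matrix (Fin d) (Fin d) ℂ) + ((k x : ℝ) / 2) • toA k E x i).PosSemidef) ∧
    (∀ x, ((1 : Matrix (Fin d) (Fin d) ℂ) - ((k x : ℝ) / 2) • ∑ i, toA k E x i).PosSemidef) := by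
  have hk0 : ∀ x, (0 : ℝ) < k x := fun x => by have := hk x; exact_mod_cast (by omega : 0 < k x)
  refine ⟨fun x i => (herm_smul ((hE x).1 _).1 _).sub (herm_smul isHermitian_one _),
    fun x i => ?_, fun x => ?_⟩
  · have : (1 : Matrix (Fin d) (Fin d) ℂ) + ((k x : ℝ) / 2) • toA k E x i =
      (k x : ℝ) • E x (emb i) := by
      have h0 := (hk0 x).ne'
      unfold toA
      match_scalars <;> field_simp <;> ring
    rw [this]
    exact psd_smul ((hE x).1 _) (hk0 x).le
  · have : (1 : Matrix (Fin d) (Fin d) ℂ) - ((k x : ℝ) / 2) • ∑ i, toA k E x i =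
      (k x : ℝ) • E x ⟨k x - 1, by have := hk x; omega⟩ := by
      have h0 := (hk0 x).ne'
      have h1 := (hE x).2
      rw [sum_last (hk x)] at h1
      have h2 := eq_sub_of_add_eq h1
      unfold toA
      rw [Finset.sum_sub_distrib, ← Finset.smul_sum, h2, Finset.sum_const, Finset.card_univ,
        Fintype.card_fin, ← Nat.cast_smul_eq_nsmul ℝ, Nat.cast_sub (by have := hk x; omega)]
      match_scalars <;> field_simp <;> ring
    rw [this]
    exact psd_smul ((hE x).1 _) (hk0 x).le

lemma cf_marg {g d : ℕ} (k : Fin g → ℕ)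
    (J : ((y : Fin g) → Fin (k y)) → Matrix (Fin d) (Fin d) ℂ) (hJ : IsPOVM J)
    (x : Fin g) (i : Fin (k x - 1)) : ∑ j, cf k j x i • J j =
      (2 : ℝ) • (∑ j, if j x = emb i then J j else 0)
        - (2 / (k x : ℝ)) • (1 : Matrix (Fin d) (Fin d) ℂ) := by
  rw [← hJ.2, Finset.smul_sum, Finset.smul_sum, ← Finset.sum_sub_distrib]
  refine Finset.sum_congr rfl fun j _ => ?_
  rw [cf_eq, sub_smul]
  split_ifs <;> simp

lemma compat_iff {g d : ℕ} (k : Fin g → ℕ) (hk : ∀ x, 2 ≤ k x)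
    (E : (x : Fin g) → Fin (k x) → Matrix (Fin d) (Fin d) ℂ) (hE : ∀ x, IsPOVM (E x)) (s : ℝ) :
    CompatibleFamily k
      (fun x i => s • E x i + ((1 - s) / (k x : ℝ)) • (1 : Matrix (Fin d) (Fin d) ℂ)) ↔
    ∃ J : ((y : Fin g) → Fin (k y)) → Matrix (Fin d) (Fin d) ℂ, IsPOVM J ∧
      ∀ x i, s • toA k E x i = ∑ j, cf k j x i • J j := by
  have hk0 : ∀ x, (k x : ℝ) ≠ 0 := fun x => by
    have := hk x; exact_mod_cast (by omega : k x ≠ 0)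
  refine exists_congr fun J => and_congr_right fun hJ => ?_
  have key : ∀ x (i : Fin (k x - 1)), s • toA k E x i = ∑ j, cf k j x i • J j ↔
      s • E x (emb i) + ((1 - s) / (k x : ℝ)) • (1 : Matrix (Fin d) (Fin d) ℂ) =
        ∑ j, if j x = emb i then J j else 0 := by
    intro x i
    rw [cf_marg k J hJ]
    set W := ∑ j, if j x = emb i then J j else 0
    have e : s • toA k E x i - ((2 : ℝ) • W - (2 / (k x : ℝ)) • (1 : Matrix (Fin d) (Fin d) ℂ)) =
      (2 : ℝ) • ((s • E x (emb i) + ((1 - s) / (k x : ℝ)) • (1 : Matrix (Fin d) (Fin d) ℂ)) - W) := by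
      unfold toA
      have := hk0 x
      match_scalars <;> field_simp <;> ring
    rw [← sub_eq_zero, e, smul_eq_zero, sub_eq_zero]
    simp
  constructor
  · intro h x i
    rw [key]; exact h x _
  · intro h x i
    have h' : ∀ i : Fin (k x - 1), _ := fun i => (key x i).mp (h x i)
    rcases cases_last (hk x) i with ⟨i', rfl⟩ | rfl
    · exact h' i'
    · have e1 := sum_last (hk x) (fun i => s • E x i + ((1 - s) / (k x : ℝ)) • (1 : Matrix (Fin d) (Fin d) ℂ))
      have e2 := sum_last (hk x) (fun i => ∑ j : (y : Fin g) → Fin (k y), if j x = i then J j else 0)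
      have e3 : ∑ i, (s • E x i + ((1 - s) / (k x : ℝ)) • (1 : Matrix (Fin d) (Fin d) ℂ)) = 1 := by
        rw [Finset.sum_add_distrib, ← Finset.smul_sum, (hE x).2, Finset.sum_const, Finset.card_univ,
          Fintype.card_fin, ← Nat.cast_smul_eq_nsmul ℝ]
        have := hk0 x
        match_scalars <;> field_simp <;> ring
      have e4 : ∑ i, (∑ j : (y : Fin g) → Fin (k y), if j x = i then J j else 0) = 1 := by
        rw [Finset.sum_comm, ← hJ.2]
        simp
      rw [e3] at e1
      rw [e4, e1] at e2
      rw [Finset.sum_congr rfl (fun i _ => h' i)] at e2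
      exact add_left_cancel e2

lemma compat_low {g d : ℕ} (hg : 1 ≤ g) (k : Fin g → ℕ) (hk : ∀ x, 2 ≤ k x)
    (E : (x : Fin g) → Fin (k x) → Matrix (Fin d) (Fin d) ℂ) (hE : ∀ x, IsPOVM (E x)) :
    CompatibleFamily k (fun x i => (1 / (g : ℝ)) • E x i +
      ((1 - 1 / (g : ℝ)) / (k x : ℝ)) • (1 : Matrix (Fin d) (Fin d) ℂ)) := by
  have hk1 : ∀ x, k x ≠ 0 := fun x => by have := hk x; omega
  have hk0 : ∀ x, (0 : ℝ) < (k x : ℝ) := fun x => by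
    have := hk x; exact_mod_cast (by omega : 0 < k x)
  have hg0 : (0 : ℝ) < g := by exact_mod_cast hg
  set N : ℝ := (Fintype.card ((x : Fin g) → Fin (k x)) : ℝ) with hN
  have hN0 : 0 < N := by
    have : Nonempty ((y : Fin g) → Fin (k y)) := ⟨fun y => ⟨0, by have := hk y; omega⟩⟩
    rw [hN]; exact_mod_cast Fintype.card_pos
  let D : (x : Fin g) → Fin (k x) → Matrix (Fin d) (Fin d) ℂ := fun x i =>
    (k x : ℝ) • E x i - 1
  have hD : ∀ x, ∑ i, D x i = 0 := by
    intro x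
    simp only [D]
    rw [Finset.sum_sub_distrib, ← Finset.smul_sum, (hE x).2, Finset.sum_const, Finset.card_univ,
          Fintype.card_fin, ← Nat.cast_smul_eq_nsmul ℝ, sub_self]
  let J : ((y : Fin g) → Fin (k y)) → Matrix (Fin d) (Fin d) ℂ := fun j =>
    N⁻¹ • (1 + (1 / (g : ℝ)) • ∑ y, D y (j y))
  have hcard : ∀ x, ∀ i : Fin (k x), ∀ M : Matrix (Fin d) (Fin d) ℂ,
      (∑ j : (y : Fin g) → Fin (k y), if j x = i then M else 0) = (N / (k x : ℝ)) • M := by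
    intro x i M
    have := sum_one k x (fun a => if a = i then M else 0) (hk1 x)
    rw [this]; simp [hN]
  have hmarg : ∀ (x : Fin g) (i : Fin (k x)),
      (1 / (g : ℝ)) • E x i + ((1 - 1 / (g : ℝ)) / (k x : ℝ)) • (1 : Matrix (Fin d) (Fin d) ℂ)
        = ∑ j, if j x = i then J j else 0 := by
    intro x i
    have e1 : ∀ j : (y : Fin g) → Fin (k y), (if j x = i then J j else 0) =
        N⁻¹ • ((if j x = i then (1 + (1 / (g : ℝ)) • D x i) else 0) + (1 / (g : ℝ)) •
          ∑ y ∈ Finset.univ.erase x, if j x = i then D y (j y) else 0) := by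
      intro j
      split_ifs with h
      · simp only [J]
        rw [← Finset.add_sum_erase _ _ (Finset.mem_univ x), h]
        simp only [smul_add, add_assoc]
      · simp
    rw [Finset.sum_congr rfl (fun j _ => e1 j), ← Finset.smul_sum, Finset.sum_add_distrib, hcard,
      ← Finset.smul_sum, Finset.sum_comm, Finset.sum_eq_zero (s := Finset.univ.erase x)]
    · simp only [D]
      have h1 := (hk0 x).ne'
      match_scalars <;> field_simp <;> ring
    · intro y hy
      exact sum_two k (Finset.ne_of_mem_erase hy).symm i (D y) (hD y)
  refine ⟨J, ⟨fun j => ?_, ?_⟩, hmarg⟩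
  · have : J j = ∑ y, (N⁻¹ * (1 / g) * k y) • E y (j y) := by
      simp only [J, D]
      rw [Finset.sum_sub_distrib, Finset.sum_const, Finset.card_univ, Fintype.card_fin,
        ← Nat.cast_smul_eq_nsmul ℝ, smul_sub, smul_smul, one_div, inv_mul_cancel₀ hg0.ne', one_smul,
        add_sub_cancel, smul_smul, Finset.smul_sum]
      simp only [smul_smul]
    rw [this]
    refine Matrix.posSemidef_sum _ fun y _ => psd_smul ((hE y).1 _) ?_
    have := hk0 y
    positivity
  · simp only [J]
    rw [← Finset.smul_sum, Finset.sum_add_distrib, ← Finset.smul_sum, Finset.sum_comm]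
    rw [Finset.sum_eq_zero (f := fun y => ∑ j : (y : Fin g) → Fin (k y), D y (j y))]
    · rw [Finset.sum_const, Finset.card_univ, ← Nat.cast_smul_eq_nsmul ℝ, smul_zero, add_zero,
        smul_smul, inv_mul_cancel₀ hN0.ne', one_smul]
    · intro y _
      rw [sum_one k y (D y) (hk1 y), hD, smul_zero]

/-- the deterministic POVMs -/
noncomputable def detP {g : ℕ} (d : ℕ) (k : Fin g → ℕ) (x : Fin g) (i : Fin (k x)) :
    Matrix (Fin d) (Fin d) ℂ := if (i : ℕ) = 0 then 1 else 0

lemma detP_povm {g d : ℕ} (k : Fin g → ℕ) (hk : ∀ x, 2 ≤ k x) (x : Fin g) :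
    IsPOVM (detP d k x) := by
  refine ⟨fun i => ?_, ?_⟩
  · unfold detP
    split_ifs
    · exact Matrix.PosSemidef.one
    · exact Matrix.PosSemidef.zero
  · have h0 : 0 < k x := by have := hk x; omega
    rw [Finset.sum_eq_single (⟨0, h0⟩ : Fin (k x))]
    · simp [detP]
    · intro b _ hb
      have : (b : ℕ) ≠ 0 := fun h => hb (Fin.ext h)
      simp [detP, this]
    · simp

lemma deg_le_one_bdd {g d : ℕ} (k : Fin g → ℕ)
    (E : (x : Fin g) → Fin (k x) → Matrix (Fin d) (Fin d) ℂ) :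
    BddAbove {s : ℝ | s ∈ Set.Icc (0 : ℝ) 1 ∧
    CompatibleFamily k
      (fun x i => s • E x i + ((1 - s) / (k x : ℝ)) • (1 : Matrix (Fin d) (Fin d) ℂ))} :=
  ⟨1, fun _ h => h.1.2⟩

lemma deg_low {g d : ℕ} (hg : 1 ≤ g) (k : Fin g → ℕ) (hk : ∀ x, 2 ≤ k x)
    (E : (x : Fin g) → Fin (k x) → Matrix (Fin d) (Fin d) ℂ) (hE : ∀ x, IsPOVM (E x)) :
    1 / (g : ℝ) ≤ compatDeg k E := by
  apply le_csSup (deg_le_one_bdd k E)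
  have hg1 : (1 : ℝ) ≤ g := by exact_mod_cast hg
  exact ⟨⟨by positivity, by rw [div_le_one (by linarith)]; exact hg1⟩, compat_low hg k hk E hE⟩

lemma min_pos {g d : ℕ} (hg : 1 ≤ g) (_hd : 1 ≤ d) (k : Fin g → ℕ) (hk : ∀ x, 2 ≤ k x) :
    0 < minCompatDeg d g k := by
  have hg1 : (0 : ℝ) < g := by exact_mod_cast hg
  refine lt_of_lt_of_le (by positivity : 0 < 1 / (g : ℝ)) ?_
  refine le_csInf ⟨_, detP d k, detP_povm k hk, rfl⟩ ?_
  rintro t ⟨E, hE, rfl⟩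
  exact deg_low hg k hk E hE

lemma min_le {g d : ℕ} (hg : 1 ≤ g) (k : Fin g → ℕ) (hk : ∀ x, 2 ≤ k x)
    (E : (x : Fin g) → Fin (k x) → Matrix (Fin d) (Fin d) ℂ) (hE : ∀ x, IsPOVM (E x)) :
    minCompatDeg d g k ≤ compatDeg k E := by
  refine csInf_le ⟨1 / (g : ℝ), ?_⟩ ⟨E, hE, rfl⟩
  rintro t ⟨E, hE, rfl⟩
  exact deg_low hg k hk E hE

lemma exists_incompat {g d : ℕ} (hg : 1 ≤ g) (hd : 1 ≤ d) (k : Fin g → ℕ) (hk : ∀ x, 2 ≤ k x)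
    {s : ℝ} (hs : minCompatDeg d g k < s) :
    ∃ E : (x : Fin g) → Fin (k x) → Matrix (Fin d) (Fin d) ℂ, (∀ x, IsPOVM (E x)) ∧
      ¬ CompatibleFamily k
      (fun x i => s • E x i + ((1 - s) / (k x : ℝ)) • (1 : Matrix (Fin d) (Fin d) ℂ)) := by
  rcases le_or_gt s 1 with h1 | h1
  · have hs0 : 0 < s := (min_pos hg hd k hk).trans hs
    obtain ⟨t, ⟨E, hE, rfl⟩, ht⟩ := exists_lt_of_csInf_lt (s := {t : ℝ | ∃ E : (x : Fin g) →
      Fin (k x) → Matrix (Fin d) (Fin d) ℂ, (∀ x, IsPOVM (E x)) ∧ t = compatDeg k E})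
      ⟨_, detP d k, detP_povm k hk, rfl⟩ hs
    refine ⟨E, hE, fun h => ?_⟩
    exact absurd (le_csSup (deg_le_one_bdd k E) ⟨⟨hs0.le, h1⟩, h⟩) (not_le.mpr ht)
  · refine ⟨detP d k, detP_povm k hk, ?_⟩
    rintro ⟨J, hJ, h⟩
    let x : Fin g := ⟨0, hg⟩
    let i : Fin (k x) := ⟨1, by have := hk x; omega⟩
    have h2 := h x i
    have h3 : (∑ j : (y : Fin g) → Fin (k y), if j x = i then J j else 0).PosSemidef := by
      refine Matrix.posSemidef_sum _ fun j _ => ?_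
      split_ifs
      · exact hJ.1 j
      · exact Matrix.PosSemidef.zero
    rw [← h2] at h3
    have h4 := (Complex.le_def.mp (h3.diag_nonneg (i := ⟨0, hd⟩))).1
    have hk0 : (0 : ℝ) < (k x : ℝ) := by
      have := hk x; exact_mod_cast (by omega : 0 < k x)
    have h5 : 0 ≤ (1 - s) / (k x : ℝ) := by simpa [detP, i] using h4
    have := div_neg_of_neg_of_pos (by linarith : 1 - s < 0) hk0
    linarith

lemma upper {g d : ℕ} (hg : 1 ≤ g) (k : Fin g → ℕ) (hk : ∀ x, 2 ≤ k x)
    (A X : (x : Fin g) → Fin (k x - 1) → Matrix (Fin d) (Fin d) ℂ)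
    (hA : ∀ x i, (A x i).IsHermitian)
    (h1 : ∀ x i, ((1 : Matrix (Fin d) (Fin d) ℂ) + ((k x : ℝ) / 2) • A x i).PosSemidef)
    (h2 : ∀ x, ((1 : Matrix (Fin d) (Fin d) ℂ) - ((k x : ℝ) / 2) • ∑ i, A x i).PosSemidef)
    (h3 : ∀ j : (x : Fin g) → Fin (k x), ((1 : Matrix (Fin d) (Fin d) ℂ) -
            ∑ x, ∑ i : Fin (k x - 1), cf k j x i • X x i).PosSemidef)
    (hm : 0 < minCompatDeg d g k) :
    lambdaMaxC (∑ x, ∑ i, A x i ⊗ₖ X x i) ≤ 1 / minCompatDeg d g k := by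
  have hk0 : ∀ x, (0 : ℝ) < (k x : ℝ) := fun x => by
    have := hk x; exact_mod_cast (by omega : 0 < k x)
  -- the POVMs
  let E : (x : Fin g) → Fin (k x) → Matrix (Fin d) (Fin d) ℂ := fun x i =>
    if h : (i : ℕ) < k x - 1 then
      (1 / (k x : ℝ)) • ((1 : Matrix (Fin d) (Fin d) ℂ) + ((k x : ℝ) / 2) • A x ⟨i, h⟩)
    else (1 / (k x : ℝ)) • ((1 : Matrix (Fin d) (Fin d) ℂ) - ((k x : ℝ) / 2) • ∑ i, A x i)
  have hEe : ∀ x (i : Fin (k x - 1)), E x (emb i) =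
      (1 / (k x : ℝ)) • ((1 : Matrix (Fin d) (Fin d) ℂ) + ((k x : ℝ) / 2) • A x i) := by
    intro x i
    have : ((emb i : Fin (k x)) : ℕ) < k x - 1 := i.2
    simp only [E, this, dif_pos]
    rfl
  have hEp : ∀ x, IsPOVM (E x) := by
    intro x
    have hx := hk0 x
    refine ⟨fun i => ?_, ?_⟩
    · simp only [E]
      split_ifs with h
      · exact psd_smul (h1 x _) (by positivity)
      · exact psd_smul (h2 x) (by positivity)
    · rw [sum_last (hk x)]
      simp only [hEe]
      simp only [E, lt_irrefl, dif_neg, not_false_eq_true]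
      rw [← Finset.smul_sum, Finset.sum_add_distrib, ← Finset.smul_sum, Finset.sum_const,
        Finset.card_univ, Fintype.card_fin, ← Nat.cast_smul_eq_nsmul ℝ,
        Nat.cast_sub (by have := hk x; omega)]
      have := hx.ne'
      match_scalars <;> field_simp <;> ring
  have hEA : ∀ x i, toA k E x i = A x i := by
    intro x i
    unfold toA
    rw [hEe]
    have := (hk0 x).ne'
    match_scalars <;> field_simp <;> ring
  set l := lambdaMaxC (∑ x, ∑ i, A x i ⊗ₖ X x i) with hl
  have key : ∀ s : ℝ, 0 < s → CompatibleFamily k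
      (fun x i => s • E x i + ((1 - s) / (k x : ℝ)) • (1 : Matrix (Fin d) (Fin d) ℂ)) →
      l ≤ 1 / s := by
    intro s hs hc
    obtain ⟨J, hJ, h⟩ := (compat_iff k hk E hEp s).mp hc
    simp only [hEA] at h
    apply lambda_le (by positivity)
    have e1 : (∑ j, J j ⊗ₖ ((1 : Matrix (Fin d) (Fin d) ℂ) -
            ∑ x, ∑ i : Fin (k x - 1), cf k j x i • X x i)).PosSemidef :=
      Matrix.posSemidef_sum _ fun j _ => (hJ.1 j).kronecker (h3 j)
    have e0 : ∀ (J : Matrix (Fin d) (Fin d) ℂ), ∀ {ι : Type} (t : Finset ι)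
        (M : ι → Matrix (Fin d) (Fin d) ℂ), J ⊗ₖ (∑ i ∈ t, M i) = ∑ i ∈ t, J ⊗ₖ M i := by
      intro J ι t M
      ext a b
      simp [Matrix.kroneckerMap_apply, Matrix.sum_apply, Finset.mul_sum]
    have e0' : ∀ (J : Matrix (Fin d) (Fin d) ℂ), ∀ {ι : Type} (t : Finset ι)
        (M : ι → Matrix (Fin d) (Fin d) ℂ), (∑ i ∈ t, M i) ⊗ₖ J = ∑ i ∈ t, M i ⊗ₖ J := by
      intro J ι t M
      ext a b
      simp [Matrix.kroneckerMap_apply, Matrix.sum_apply, Finset.sum_mul]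
    have e2 : (∑ j, J j ⊗ₖ ((1 : Matrix (Fin d) (Fin d) ℂ) -
            ∑ x, ∑ i : Fin (k x - 1), cf k j x i • X x i)) =
        1 - s • (∑ x, ∑ i, A x i ⊗ₖ X x i) := by
      have f1 : ∀ j, J j ⊗ₖ ((1 : Matrix (Fin d) (Fin d) ℂ) -
            ∑ x, ∑ i : Fin (k x - 1), cf k j x i • X x i) =
          J j ⊗ₖ (1 : Matrix (Fin d) (Fin d) ℂ) -
            ∑ x, ∑ i : Fin (k x - 1), (cf k j x i • J j) ⊗ₖ X x i := by
        intro j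
        have e5 : ∀ P Q R : Matrix (Fin d) (Fin d) ℂ, P ⊗ₖ (Q - R) = P ⊗ₖ Q - P ⊗ₖ R := by
          intro P Q R
          ext a b
          simp [Matrix.kroneckerMap_apply, mul_sub]
        rw [e5]
        simp only [e0, Matrix.kronecker_smul, Matrix.smul_kronecker]
      simp only [f1]
      rw [Finset.sum_sub_distrib, ← e0', hJ.2, Matrix.one_kronecker_one]
      congr 1
      rw [Finset.sum_comm, Finset.smul_sum]
      refine Finset.sum_congr rfl fun x _ => ?_
      rw [Finset.sum_comm, Finset.smul_sum]
      refine Finset.sum_congr rfl fun i _ => ?_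
      rw [← e0', ← h, Matrix.smul_kronecker]
    rw [e2] at e1
    have e3 := psd_smul e1 (by positivity : 0 ≤ 1 / s)
    rwa [smul_sub, smul_smul, one_div, inv_mul_cancel₀ hs.ne', one_smul, ← one_div] at e3
  have hdeg := min_le hg k hk E hEp
  have hg1 : (0 : ℝ) < g := by exact_mod_cast hg
  rcases le_or_gt l 0 with hl0 | hl0
  · exact hl0.trans (by positivity)
  · rw [le_div_comm₀ hl0 hm]
    refine hdeg.trans ?_
    apply Real.sSup_le _ (by positivity)
    rintro s ⟨⟨hs0, hs1⟩, hc⟩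
    rcases hs0.eq_or_lt with rfl | hs0
    · positivity
    · rw [le_div_comm₀ hs0 hl0]
      exact key s hs0 hc

end Stmt19

/-- The supremum of `λ_max(Σ_{x,i} A_{i|x} ⊗ X_{i|x})` over Hermitian families subject to the
stated spectrahedral constraints equals `1/s_ℂ(d,g,(k_1,…,k_g))`. -/
theorem stmt_19 (g d : ℕ) (hg : 1 ≤ g) (hd : 1 ≤ d) (k : Fin g → ℕ) (hk : ∀ x, 2 ≤ k x) :
    sSup {t : ℝ |
      ∃ A X : (x : Fin g) → Fin (k x - 1) → Matrix (Fin d) (Fin d) ℂ,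
        (∀ x i, (A x i).IsHermitian) ∧
        (∀ x i, (X x i).IsHermitian) ∧
        (∀ x i, ((1 : Matrix (Fin d) (Fin d) ℂ) + ((k x : ℝ) / 2) • A x i).PosSemidef) ∧
        (∀ x, ((1 : Matrix (Fin d) (Fin d) ℂ) - ((k x : ℝ) / 2) • ∑ i, A x i).PosSemidef) ∧
        (∀ j : (x : Fin g) → Fin (k x),
          ((1 : Matrix (Fin d) (Fin d) ℂ) -
            ∑ x, ∑ i : Fin (k x - 1), ((-2 / (k x : ℝ)) +
              (if (i : ℕ) = ((j x : ℕ)) then 2 else 0)) • X x i).PosSemidef) ∧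
        t = lambdaMaxC (∑ x, ∑ i, A x i ⊗ₖ X x i)}
    = 1 / minCompatDeg d g k := by
  set S := {t : ℝ |
      ∃ A X : (x : Fin g) → Fin (k x - 1) → Matrix (Fin d) (Fin d) ℂ,
        (∀ x i, (A x i).IsHermitian) ∧
        (∀ x i, (X x i).IsHermitian) ∧
        (∀ x i, ((1 : Matrix (Fin d) (Fin d) ℂ) + ((k x : ℝ) / 2) • A x i).PosSemidef) ∧
        (∀ x, ((1 : Matrix (Fin d) (Fin d) ℂ) - ((k x : ℝ) / 2) • ∑ i, A x i).PosSemidef) ∧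
        (∀ j : (x : Fin g) → Fin (k x),
          ((1 : Matrix (Fin d) (Fin d) ℂ) -
            ∑ x, ∑ i : Fin (k x - 1), ((-2 / (k x : ℝ)) +
              (if (i : ℕ) = ((j x : ℕ)) then 2 else 0)) • X x i).PosSemidef) ∧
        t = lambdaMaxC (∑ x, ∑ i, A x i ⊗ₖ X x i)} with hS
  have hm : 0 < minCompatDeg d g k := Stmt19.min_pos hg hd k hk
  have hup : ∀ t ∈ S, t ≤ 1 / minCompatDeg d g k := by
    rintro t ⟨A, X, hA, hX, h1, h2, h3, rfl⟩
    exact Stmt19.upper hg k hk A X hA h1 h2 h3 hm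
  have hlow : ∀ s, minCompatDeg d g k < s → ∃ t ∈ S, 1 / s ≤ t := by
    intro s hs
    have hs0 : 0 < s := hm.trans hs
    obtain ⟨E, hE, hno⟩ := Stmt19.exists_incompat hg hd k hk hs
    obtain ⟨a1, a2, a3⟩ := Stmt19.toA_feas k hk E hE
    obtain ⟨X, b1, b2, b3⟩ := Stmt19.lower_sep hd k hk hs0 (Stmt19.toA k E) a1
      (fun ⟨J, hJ, h⟩ => hno ((Stmt19.compat_iff k hk E hE s).mpr ⟨J, hJ, h⟩))
    exact ⟨_, ⟨Stmt19.toA k E, X, a1, b1, a2, a3, b2, rfl⟩, b3⟩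
  have hbdd : BddAbove S := ⟨_, hup⟩
  apply le_antisymm
  · obtain ⟨t, ht, _⟩ := hlow (minCompatDeg d g k + 1) (by linarith)
    exact csSup_le ⟨t, ht⟩ hup
  · have hpos : 0 < sSup S := by
      obtain ⟨t, ht, h⟩ := hlow (minCompatDeg d g k + 1) (by linarith)
      have : 0 < 1 / (minCompatDeg d g k + 1) := by positivity
      exact lt_of_lt_of_le this (h.trans (le_csSup hbdd ht))
    rw [div_le_comm₀ hm hpos]
    refine le_of_forall_gt_imp_ge_of_dense fun s hs => ?_
    obtain ⟨t, ht, h⟩ := hlow s hs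
    rw [div_le_comm₀ hpos (hm.trans hs)]
    exact h.trans (le_csSup hbdd ht)
end
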